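/- Let k ≥ 1 and d ≥ 1 be integers. If a connected graph G (necessarily bipartite, with q ≥ 1 edges) admits a set-ordered graceful labeling, then G admits an edge-difference (k,d)-total coloring and an odd-edge edge-difference (k,d)-total coloring. -/

import Mathlib

/-- `(X, Y)` is a bipartition of the graph `G`: every vertex lies in exactly one of `X, Y`,
and every edge joins a vertex of `X` to a vertex of `Y`. -/
def IsBipartitionOf {V : Type} (G : SimpleGraph V) (X Y : Set V) : Prop :=
  (∀ v : V, v ∈ X ∨ v ∈ Y) ∧ Disjoint X Y ∧
    ∀ ⦃u v : V⦄, G.Adj u v → (u ∈ X ∧ v ∈ Y) ∨ (u ∈ Y ∧ v ∈ X)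

/-- The vertex/edge color membership constraints common to all `(k,d)`-total colorings:
colors of `X`-vertices are multiples of `d`, colors of `Y`-vertices and of edges lie in
`{k + jd : j ≥ 0}`. -/
def KDTotalVertexCond {V : Type} (G : SimpleGraph V) (X Y : Set V) (k d : ℕ)
    (fV : V → ℕ) (fE : Sym2 V → ℕ) : Prop :=
  (∀ x ∈ X, d ∣ fV x) ∧
  (∀ y ∈ Y, ∃ j : ℕ, fV y = k + j * d) ∧
  (∀ ⦃u v : V⦄, G.Adj u v → ∃ j : ℕ, fE s(u, v) = k + j * d)

/-- The set of colors used on the edges of `G`. -/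
def EdgeColorSet {V : Type} (G : SimpleGraph V) (fE : Sym2 V → ℕ) : Set ℕ :=
  {c : ℕ | ∃ u v : V, G.Adj u v ∧ fE s(u, v) = c}

/-- The set `{k + jd : 0 ≤ j ≤ q - 1}`. -/
def ArithProgSet (k d q : ℕ) : Set ℕ := {c : ℕ | ∃ j : ℕ, j < q ∧ c = k + j * d}

/-- The odd set `{k + (2j - 1)d : 1 ≤ j ≤ q}`. -/
def OddArithProgSet (k d q : ℕ) : Set ℕ :=
  {c : ℕ | ∃ j : ℕ, 1 ≤ j ∧ j ≤ q ∧ c = k + (2 * j - 1) * d}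

/-- A graceful `(k,d)`-total coloring of `G` (with bipartition `(X,Y)` and `q` edges). -/
def GracefulKDTotalColoring {V : Type} (G : SimpleGraph V) (X Y : Set V) (k d q : ℕ)
    (fV : V → ℕ) (fE : Sym2 V → ℕ) : Prop :=
  KDTotalVertexCond G X Y k d fV fE ∧
  (∀ ⦃u v : V⦄, G.Adj u v → fE s(u, v) = Nat.dist (fV u) (fV v)) ∧
  EdgeColorSet G fE = ArithProgSet k d q

/-- A harmonious `(k,d)`-total coloring of `G`:
`f(uv) - k ≡ f(u) + f(v) - k (mod qd)` for every edge `uv`. -/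
def HarmoniousKDTotalColoring {V : Type} (G : SimpleGraph V) (X Y : Set V) (k d q : ℕ)
    (fV : V → ℕ) (fE : Sym2 V → ℕ) : Prop :=
  KDTotalVertexCond G X Y k d fV fE ∧
  (∀ ⦃u v : V⦄, G.Adj u v →
    Int.ModEq ((q * d : ℕ) : ℤ) ((fE s(u, v) : ℤ) - (k : ℤ))
      (((fV u : ℤ) + (fV v : ℤ)) - (k : ℤ))) ∧
  EdgeColorSet G fE = ArithProgSet k d q

/-- An edge-magic `(k,d)`-total coloring: `f(u) + f(uv) + f(v)` is constant. -/
def EdgeMagicKDTotalColoring {V : Type} (G : SimpleGraph V) (X Y : Set V) (k d q : ℕ)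
    (fV : V → ℕ) (fE : Sym2 V → ℕ) : Prop :=
  KDTotalVertexCond G X Y k d fV fE ∧
  (∃ c : ℕ, ∀ ⦃u v : V⦄, G.Adj u v → fV u + fE s(u, v) + fV v = c) ∧
  EdgeColorSet G fE = ArithProgSet k d q

/-- An edge-difference `(k,d)`-total coloring: `f(uv) + |f(u) - f(v)|` is constant. -/
def EdgeDifferenceKDTotalColoring {V : Type} (G : SimpleGraph V) (X Y : Set V) (k d q : ℕ)
    (fV : V → ℕ) (fE : Sym2 V → ℕ) : Prop :=
  KDTotalVertexCond G X Y k d fV fE ∧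
  (∃ c : ℕ, ∀ ⦃u v : V⦄, G.Adj u v → fE s(u, v) + Nat.dist (fV u) (fV v) = c) ∧
  EdgeColorSet G fE = ArithProgSet k d q

/-- A graceful-difference `(k,d)`-total coloring: `||f(u) - f(v)| - f(uv)|` is constant. -/
def GracefulDifferenceKDTotalColoring {V : Type} (G : SimpleGraph V) (X Y : Set V) (k d q : ℕ)
    (fV : V → ℕ) (fE : Sym2 V → ℕ) : Prop :=
  KDTotalVertexCond G X Y k d fV fE ∧
  (∃ c : ℕ, ∀ ⦃u v : V⦄, G.Adj u v →
    ((Nat.dist (fV u) (fV v) : ℤ) - (fE s(u, v) : ℤ)).natAbs = c) ∧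
  EdgeColorSet G fE = ArithProgSet k d q

/-- A felicitous-difference `(k,d)`-total coloring: `|f(u) + f(v) - f(uv)|` is constant. -/
def FelicitousDifferenceKDTotalColoring {V : Type} (G : SimpleGraph V) (X Y : Set V) (k d q : ℕ)
    (fV : V → ℕ) (fE : Sym2 V → ℕ) : Prop :=
  KDTotalVertexCond G X Y k d fV fE ∧
  (∃ c : ℕ, ∀ ⦃u v : V⦄, G.Adj u v →
    (((fV u : ℤ) + (fV v : ℤ)) - (fE s(u, v) : ℤ)).natAbs = c) ∧
  EdgeColorSet G fE = ArithProgSet k d q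

/-- An edge-antimagic `(k,d)`-total coloring: the sums `f(u) + f(uv) + f(v)` over the edges
form the set `{2k + 2(a+j)d : 0 ≤ j ≤ q - 1}` for some `a ≥ 0`. -/
def EdgeAntimagicKDTotalColoring {V : Type} (G : SimpleGraph V) (X Y : Set V) (k d q : ℕ)
    (fV : V → ℕ) (fE : Sym2 V → ℕ) : Prop :=
  KDTotalVertexCond G X Y k d fV fE ∧
  ∃ a : ℕ, {c : ℕ | ∃ u v : V, G.Adj u v ∧ fV u + fE s(u, v) + fV v = c}
      = {c : ℕ | ∃ j : ℕ, j < q ∧ c = 2 * k + 2 * (a + j) * d}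

/-- An odd-edge graceful-difference `(k,d)`-total coloring. -/
def OddEdgeGracefulDifferenceKDTotalColoring {V : Type} (G : SimpleGraph V) (X Y : Set V)
    (k d q : ℕ) (fV : V → ℕ) (fE : Sym2 V → ℕ) : Prop :=
  KDTotalVertexCond G X Y k d fV fE ∧
  (∃ c : ℕ, ∀ ⦃u v : V⦄, G.Adj u v →
    ((Nat.dist (fV u) (fV v) : ℤ) - (fE s(u, v) : ℤ)).natAbs = c) ∧
  EdgeColorSet G fE = OddArithProgSet k d q

/-- An odd-edge edge-difference `(k,d)`-total coloring. -/
def OddEdgeEdgeDifferenceKDTotalColoring {V : Type} (G : SimpleGraph V) (X Y : Set V)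
    (k d q : ℕ) (fV : V → ℕ) (fE : Sym2 V → ℕ) : Prop :=
  KDTotalVertexCond G X Y k d fV fE ∧
  (∃ c : ℕ, ∀ ⦃u v : V⦄, G.Adj u v → fE s(u, v) + Nat.dist (fV u) (fV v) = c) ∧
  EdgeColorSet G fE = OddArithProgSet k d q

/-- An odd-edge edge-magic `(k,d)`-total coloring. -/
def OddEdgeEdgeMagicKDTotalColoring {V : Type} (G : SimpleGraph V) (X Y : Set V)
    (k d q : ℕ) (fV : V → ℕ) (fE : Sym2 V → ℕ) : Prop :=
  KDTotalVertexCond G X Y k d fV fE ∧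
  (∃ c : ℕ, ∀ ⦃u v : V⦄, G.Adj u v → fV u + fE s(u, v) + fV v = c) ∧
  EdgeColorSet G fE = OddArithProgSet k d q

/-- An odd-edge felicitous-difference `(k,d)`-total coloring. -/
def OddEdgeFelicitousDifferenceKDTotalColoring {V : Type} (G : SimpleGraph V) (X Y : Set V)
    (k d q : ℕ) (fV : V → ℕ) (fE : Sym2 V → ℕ) : Prop :=
  KDTotalVertexCond G X Y k d fV fE ∧
  (∃ c : ℕ, ∀ ⦃u v : V⦄, G.Adj u v →
    (((fV u : ℤ) + (fV v : ℤ)) - (fE s(u, v) : ℤ)).natAbs = c) ∧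
  EdgeColorSet G fE = OddArithProgSet k d q

/-- A set-ordered graceful labeling of `G` (with bipartition `(X,Y)` and `q` edges):
an injective map into `{0, …, q}` whose induced edge labels `|f(u) - f(v)|` are exactly
`{1, …, q}`, with `max f(X) < min f(Y)`. -/
def SetOrderedGracefulLabeling {V : Type} (G : SimpleGraph V) (X Y : Set V)
    (f : V → ℕ) (q : ℕ) : Prop :=
  Function.Injective f ∧ (∀ v : V, f v ≤ q) ∧
  (∀ x ∈ X, ∀ y ∈ Y, f x < f y) ∧
  {c : ℕ | ∃ u v : V, G.Adj u v ∧ Nat.dist (f u) (f v) = c} = Set.Icc 1 q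

/-- The vertex coloring `x ↦ m f(x) d` on `X` and `y ↦ k + m f(y) d` on `Y`. -/
noncomputable def scaledVertexColor {V : Type} (X : Set V) (f : V → ℕ) (k d m : ℕ) (v : V) : ℕ :=
  open Classical in if v ∈ X then m * f v * d else k + m * f v * d

/-- The edge coloring `uv ↦ k + (m (q - |f(u) - f(v)|) + r) d`. -/
def complementEdgeColor {V : Type} (f : V → ℕ) (k d q m r : ℕ) : Sym2 V → ℕ :=
  Sym2.lift ⟨fun u v => k + (m * (q - Nat.dist (f u) (f v)) + r) * d,
    fun u v => by simp only [Nat.dist_comm]⟩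

theorem complementEdgeColor_mk {V : Type} (f : V → ℕ) (k d q m r : ℕ) (u v : V) :
    complementEdgeColor f k d q m r s(u, v) =
      k + (m * (q - Nat.dist (f u) (f v)) + r) * d := rfl

theorem dist_scaledVertexColor {V : Type} {X Y : Set V} {f : V → ℕ} (hXY : Disjoint X Y)
    (hlt : ∀ x ∈ X, ∀ y ∈ Y, f x < f y) (k d m : ℕ) {x y : V} (hx : x ∈ X) (hy : y ∈ Y) :
    Nat.dist (scaledVertexColor X f k d m x) (scaledVertexColor X f k d m y) =
      k + m * Nat.dist (f x) (f y) * d := by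
  have hyX : y ∉ X := fun h => Set.disjoint_left.mp hXY h hy
  obtain ⟨t, ht⟩ := Nat.exists_eq_add_of_le (hlt x hx y hy).le
  have hdist : Nat.dist (f x) (f y) = t := by
    rw [Nat.dist_eq_sub_of_le (hlt x hx y hy).le]
    omega
  have hcol : k + m * f y * d = m * f x * d + (k + m * t * d) := by
    rw [ht]
    ring
  simp only [scaledVertexColor, if_pos hx, if_neg hyX, hdist, hcol]
  rw [Nat.dist_eq_sub_of_le (Nat.le_add_right _ _), Nat.add_sub_cancel_left]

theorem kdTotalVertexCond_scaled {V : Type} {G : SimpleGraph V} {X Y : Set V}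
    (hXY : Disjoint X Y) (f : V → ℕ) (k d q m r : ℕ) :
    KDTotalVertexCond G X Y k d (scaledVertexColor X f k d m)
      (complementEdgeColor f k d q m r) := by
  refine ⟨fun x hx => ?_, fun y hy => ⟨m * f y, ?_⟩, fun u v _ => ⟨_, rfl⟩⟩
  · simp [scaledVertexColor, hx]
  · have hyX : y ∉ X := fun h => Set.disjoint_left.mp hXY h hy
    simp [scaledVertexColor, hyX]

theorem dist_mem_Icc_of_adj {V : Type} {G : SimpleGraph V} {X Y : Set V} {f : V → ℕ} {q : ℕ}
    (hf : SetOrderedGracefulLabeling G X Y f q) {u v : V} (huv : G.Adj u v) :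
    Nat.dist (f u) (f v) ∈ Set.Icc 1 q :=
  hf.2.2.2 ▸ ⟨u, v, huv, rfl⟩

theorem complementEdgeColor_add_dist {V : Type} {G : SimpleGraph V} {X Y : Set V} {f : V → ℕ}
    {q : ℕ} (hbip : IsBipartitionOf G X Y) (hf : SetOrderedGracefulLabeling G X Y f q)
    (k d m r : ℕ) {u v : V} (huv : G.Adj u v) :
    complementEdgeColor f k d q m r s(u, v) +
      Nat.dist (scaledVertexColor X f k d m u) (scaledVertexColor X f k d m v) =
        2 * k + (m * q + r) * d := by
  have hdist : Nat.dist (scaledVertexColor X f k d m u) (scaledVertexColor X f k d m v) =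
      k + m * Nat.dist (f u) (f v) * d := by
    rcases hbip.2.2 huv with ⟨hu, hv⟩ | ⟨hu, hv⟩
    · exact dist_scaledVertexColor hbip.2.1 hf.2.2.1 k d m hu hv
    · rw [Nat.dist_comm, Nat.dist_comm (f u)]
      exact dist_scaledVertexColor hbip.2.1 hf.2.2.1 k d m hv hu
  obtain ⟨s, hs⟩ := Nat.exists_eq_add_of_le (dist_mem_Icc_of_adj hf huv).2
  have hsub : q - Nat.dist (f u) (f v) = s := by omega
  rw [hdist, complementEdgeColor_mk, hsub]
  conv_rhs => rw [hs]
  ring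

theorem edgeColorSet_complementEdgeColor {V : Type} {G : SimpleGraph V} {X Y : Set V} {f : V → ℕ}
    {q : ℕ} (hf : SetOrderedGracefulLabeling G X Y f q) (k d m r : ℕ) :
    EdgeColorSet G (complementEdgeColor f k d q m r) =
      {c | ∃ j, j < q ∧ c = k + (m * j + r) * d} := by
  ext c
  constructor
  · rintro ⟨u, v, huv, rfl⟩
    have h := dist_mem_Icc_of_adj hf huv
    exact ⟨q - Nat.dist (f u) (f v), by have := h.1; have := h.2; omega, rfl⟩
  · rintro ⟨j, hj, rfl⟩
    have hmem : q - j ∈ Set.Icc 1 q := ⟨by omega, by omega⟩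
    rw [← hf.2.2.2] at hmem
    obtain ⟨u, v, huv, h⟩ := hmem
    refine ⟨u, v, huv, ?_⟩
    rw [complementEdgeColor_mk, h, Nat.sub_sub_self hj.le]

theorem oddArithProgSet_eq (k d q : ℕ) :
    OddArithProgSet k d q = {c | ∃ j, j < q ∧ c = k + (2 * j + 1) * d} := by
  ext c
  constructor
  · rintro ⟨j, h1, hq, rfl⟩
    exact ⟨j - 1, by omega, by rw [show 2 * j - 1 = 2 * (j - 1) + 1 by omega]⟩
  · rintro ⟨j, hj, rfl⟩
    exact ⟨j + 1, by omega, by omega, by rw [show 2 * (j + 1) - 1 = 2 * j + 1 by omega]⟩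

/-- **STATEMENT.** If a connected (bipartite) graph admits a set-ordered graceful labeling,
then it admits the stated `(k,d)`-total coloring and its odd-edge variant. -/
theorem set_ordered_graceful_to_edge_difference_kd
    {V : Type} [Fintype V] [DecidableEq V]
    (G : SimpleGraph V) (X Y : Set V) (f : V → ℕ)
    (hconn : G.Connected) (hbip : IsBipartitionOf G X Y)
    (hq : 1 ≤ Nat.card G.edgeSet)
    (hsog : SetOrderedGracefulLabeling G X Y f (Nat.card G.edgeSet))
    (k d : ℕ) (hk : 1 ≤ k) (hd : 1 ≤ d) :
    (∃ (X' Y' : Set V) (fV : V → ℕ) (fE : Sym2 V → ℕ),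
        IsBipartitionOf G X' Y' ∧
        EdgeDifferenceKDTotalColoring G X' Y' k d (Nat.card G.edgeSet) fV fE) ∧
    (∃ (X' Y' : Set V) (fV : V → ℕ) (fE : Sym2 V → ℕ),
        IsBipartitionOf G X' Y' ∧
        OddEdgeEdgeDifferenceKDTotalColoring G X' Y' k d (Nat.card G.edgeSet) fV fE) := by
  refine ⟨⟨X, Y, scaledVertexColor X f k d 1, complementEdgeColor f k d _ 1 0, hbip,
      kdTotalVertexCond_scaled hbip.2.1 f k d _ 1 0,
      ⟨_, fun _ _ huv => complementEdgeColor_add_dist hbip hsog k d 1 0 huv⟩, ?_⟩,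
    ⟨X, Y, scaledVertexColor X f k d 2, complementEdgeColor f k d _ 2 1, hbip,
      kdTotalVertexCond_scaled hbip.2.1 f k d _ 2 1,
      ⟨_, fun _ _ huv => complementEdgeColor_add_dist hbip hsog k d 2 1 huv⟩, ?_⟩⟩
  · rw [edgeColorSet_complementEdgeColor hsog]
    simp [ArithProgSet]
  · rw [edgeColorSet_complementEdgeColor hsog, oddArithProgSet_eq]
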